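/- Two simple modules D(r) and D(r') (r, r' ‚ąą R_b) are isomorphic if and only if r = r'. Specifically, from D(r) one recovers ‚Ąď(r) as dim_K D(r) and N(r) as the set of integers n for which there exists a nonzero x ‚ąą D(r) with ŌÜ^{‚Ąď(r)}(x) = u^n x; these data determine r in R_b. -/

import Mathlib

/-- The φ-semilinear operator of the φ-module `D(d, n, a)` over `K = k((u))`. -/
noncomputable def Dphi {k : Type*} [Field k]
    (φ : LaurentSeries k →+* LaurentSeries k) (d n : ℕ) (a : k)
    (x : Fin d → LaurentSeries k) : Fin d → LaurentSeries k :=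
  fun j =>
    if (j : ℕ) = 0 then
      HahnSeries.single (n : ℤ) a * φ (x ⟨d - 1, by have := j.isLt; omega⟩)
    else
      φ (x ⟨(j : ℕ) - 1, by have := j.isLt; omega⟩)


section Helpers

variable {k : Type*} [Field k]

/-- Isomorphism of the φ-modules `D(d, n)` and `D(d', n')`. -/
def DIso (φ : LaurentSeries k →+* LaurentSeries k) (d n d' n' : ℕ) : Prop :=
  ∃ F : (Fin d → LaurentSeries k) ≃ₗ[LaurentSeries k] (Fin d' → LaurentSeries k),
    ∀ x, F (Dphi φ d n 1 x) = Dphi φ d' n' 1 (F x)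

theorem DIso.symm {φ : LaurentSeries k →+* LaurentSeries k} {d n d' n' : ℕ}
    (h : DIso φ d n d' n') : DIso φ d' n' d n := by
  obtain ⟨F, hF⟩ := h
  refine ⟨F.symm, fun x => ?_⟩
  apply F.injective
  rw [hF]
  simp

theorem DIso.trans {φ : LaurentSeries k →+* LaurentSeries k} {d n d' n' d'' n'' : ℕ}
    (h : DIso φ d n d' n') (h' : DIso φ d' n' d'' n'') : DIso φ d n d'' n'' := by
  obtain ⟨F, hF⟩ := h
  obtain ⟨G, hG⟩ := h'
  exact ⟨F.trans G, fun x => by simp [hF, hG]⟩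

theorem DIso.rfl' (φ : LaurentSeries k →+* LaurentSeries k) (d n : ℕ) : DIso φ d n d n :=
  ⟨LinearEquiv.refl _ _, fun _ => rfl⟩

theorem phi_single {b : ℕ} (hb : 1 < b) {σ : k ≃+* k} {φ : LaurentSeries k →+* LaurentSeries k}
    (hφ1 : ∀ (f : LaurentSeries k) (m : ℤ), (φ f).coeff ((b : ℤ) * m) = σ (f.coeff m))
    (hφ2 : ∀ (f : LaurentSeries k) (m : ℤ), ¬ ((b : ℤ) ∣ m) → (φ f).coeff m = 0)
    (w : ℤ) :
    φ (HahnSeries.single w (1 : k)) = HahnSeries.single ((b : ℤ) * w) (1 : k) := by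
  have hb0 : (b : ℤ) ≠ 0 := by omega
  ext m
  by_cases h : (b : ℤ) ∣ m
  · obtain ⟨m, rfl⟩ := h
    rw [hφ1]
    by_cases hm : m = w
    · subst hm; simp
    · rw [HahnSeries.coeff_single_of_ne hm, HahnSeries.coeff_single_of_ne, map_zero]
      intro h
      exact hm (mul_left_cancel₀ hb0 h)
  · rw [hφ2 _ _ h, HahnSeries.coeff_single_of_ne]
    rintro rfl
    exact h (dvd_mul_right _ _)

theorem phi_order {b : ℕ} (hb : 1 < b) {σ : k ≃+* k} {φ : LaurentSeries k →+* LaurentSeries k}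
    (hφ1 : ∀ (f : LaurentSeries k) (m : ℤ), (φ f).coeff ((b : ℤ) * m) = σ (f.coeff m))
    (hφ2 : ∀ (f : LaurentSeries k) (m : ℤ), ¬ ((b : ℤ) ∣ m) → (φ f).coeff m = 0)
    {f : LaurentSeries k} (hf : f ≠ 0) : (φ f).order = b * f.order := by
  have hb0 : (0 : ℤ) < b := by omega
  have hne : φ f ≠ 0 := (map_ne_zero φ).2 hf
  apply le_antisymm
  · apply HahnSeries.order_le_of_coeff_ne_zero
    rw [hφ1]
    simpa using HahnSeries.coeff_order_eq_zero.not.2 hf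
  · have h := HahnSeries.coeff_order_eq_zero.not.2 hne
    by_cases hd : (b : ℤ) ∣ (φ f).order
    · obtain ⟨m, hm⟩ := hd
      rw [hm, hφ1] at h
      rw [hm]
      apply mul_le_mul_of_nonneg_left _ hb0.le
      apply HahnSeries.order_le_of_coeff_ne_zero
      intro h0
      exact h (by simp [h0])
    · exact absurd (hφ2 _ _ hd) h

theorem phi_iter_order {b : ℕ} (hb : 1 < b) {σ : k ≃+* k} {φ : LaurentSeries k →+* LaurentSeries k}
    (hφ1 : ∀ (f : LaurentSeries k) (m : ℤ), (φ f).coeff ((b : ℤ) * m) = σ (f.coeff m))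
    (hφ2 : ∀ (f : LaurentSeries k) (m : ℤ), ¬ ((b : ℤ) ∣ m) → (φ f).coeff m = 0)
    {f : LaurentSeries k} (hf : f ≠ 0) (i : ℕ) :
    φ^[i] f ≠ 0 ∧ (φ^[i] f).order = (b : ℤ) ^ i * f.order := by
  induction i with
  | zero => simpa using hf
  | succ i ih =>
    rw [Function.iterate_succ_apply']
    refine ⟨(map_ne_zero φ).2 ih.1, ?_⟩
    rw [phi_order hb hφ1 hφ2 ih.1, ih.2]
    ring

theorem Dphi_iter_low {φ : LaurentSeries k →+* LaurentSeries k} (d n : ℕ) (x : Fin d → LaurentSeries k) (i : ℕ) :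
    ∀ j l : Fin d, (j : ℕ) = l + i → (Dphi φ d n 1)^[i] x j = φ^[i] (x l) := by
  induction i with
  | zero =>
    intro j l h
    have : j = l := Fin.ext (by omega)
    simp [this]
  | succ i ih =>
    intro j l h
    rw [Function.iterate_succ_apply', Function.iterate_succ_apply', Dphi, if_neg (by omega)]
    rw [ih _ l (by simp; omega)]

theorem Dphi_iter_high {b : ℕ} (hb : 1 < b) {σ : k ≃+* k} {φ : LaurentSeries k →+* LaurentSeries k}
    (hφ1 : ∀ (f : LaurentSeries k) (m : ℤ), (φ f).coeff ((b : ℤ) * m) = σ (f.coeff m))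
    (hφ2 : ∀ (f : LaurentSeries k) (m : ℤ), ¬ ((b : ℤ) ∣ m) → (φ f).coeff m = 0)
    (d n : ℕ) (x : Fin d → LaurentSeries k) (i : ℕ) :
    ∀ j l : Fin d, d + (j : ℕ) = l + i → (Dphi φ d n 1)^[i] x j =
      HahnSeries.single ((n : ℤ) * (b : ℤ) ^ (j : ℕ)) (1 : k) * φ^[i] (x l) := by
  induction i with
  | zero => intro j l h; omega
  | succ i ih =>
    intro j l h
    rw [Function.iterate_succ_apply', Function.iterate_succ_apply', Dphi]
    by_cases hj : (j : ℕ) = 0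
    · rw [if_pos hj, Dphi_iter_low d n x i _ l (by simp; omega), hj]
      simp
    · rw [if_neg hj, ih _ l (by simp; omega), map_mul, phi_single hb hφ1 hφ2]
      congr 3
      obtain ⟨t, ht⟩ := Nat.exists_eq_succ_of_ne_zero hj
      simp only [ht, Nat.succ_eq_add_one, Nat.add_sub_cancel]
      ring

theorem DIso.forward {b : ℕ} (hb : 1 < b) {σ : k ≃+* k} {φ : LaurentSeries k →+* LaurentSeries k}
    (hφ1 : ∀ (f : LaurentSeries k) (m : ℤ), (φ f).coeff ((b : ℤ) * m) = σ (f.coeff m))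
    (hφ2 : ∀ (f : LaurentSeries k) (m : ℤ), ¬ ((b : ℤ) ∣ m) → (φ f).coeff m = 0)
    {d n d' n' : ℕ} (hd : 0 < d) (h : DIso φ d n d' n') :
    d = d' ∧ ∃ (j : ℕ) (v : ℤ), (n : ℤ) - n' * (b : ℤ) ^ j = ((b : ℤ) ^ d - 1) * v := by
  obtain ⟨F, hF⟩ := h
  have hdd : d = d' := by simpa using F.finrank_eq
  subst hdd
  refine ⟨rfl, ?_⟩
  set e : Fin d → LaurentSeries k := Pi.single ⟨0, hd⟩ 1 with he
  have he0 : e ≠ 0 := by simp [he]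
  have hit : (Dphi φ d n 1)^[d] e = HahnSeries.single (n : ℤ) (1 : k) • e := by
    funext j
    rw [Dphi_iter_high hb hφ1 hφ2 d n e d j j (by omega)]
    by_cases hj : j = ⟨0, hd⟩
    · subst hj
      simp [he, iterate_map_one]
    · simp [he, hj, iterate_map_zero]
  have hc : F ((Dphi φ d n 1)^[d] e) = (Dphi φ d n' 1)^[d] (F e) :=
    (Function.Semiconj.iterate_right (f := F) (fun x => hF x) d) e
  rw [hit, map_smul] at hc
  have hy : F e ≠ 0 := by simpa using he0
  obtain ⟨j, hj⟩ := Function.ne_iff.1 hy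
  have hj : F e j ≠ 0 := hj
  have hcj := congrFun hc j
  rw [Dphi_iter_high hb hφ1 hφ2 d n' (F e) d j j (by omega), Pi.smul_apply, smul_eq_mul] at hcj
  obtain ⟨h1, h2⟩ := phi_iter_order hb hφ1 hφ2 hj d
  have ho := congrArg HahnSeries.order hcj
  rw [HahnSeries.order_mul (by simp) hj, HahnSeries.order_mul (by simp) h1, h2,
    HahnSeries.order_single one_ne_zero, HahnSeries.order_single one_ne_zero] at ho
  exact ⟨j, (F e j).order, by linarith⟩

/-- `D(d, n) ≅ D(d, n')` if `n = n' + w (b^d - 1)`. -/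
theorem DIso.shift {b : ℕ} (hb : 1 < b) {σ : k ≃+* k} {φ : LaurentSeries k →+* LaurentSeries k}
    (hφ1 : ∀ (f : LaurentSeries k) (m : ℤ), (φ f).coeff ((b : ℤ) * m) = σ (f.coeff m))
    (hφ2 : ∀ (f : LaurentSeries k) (m : ℤ), ¬ ((b : ℤ) ∣ m) → (φ f).coeff m = 0)
    {d n n' : ℕ} (w : ℤ) (h : (n : ℤ) = n' + w * ((b : ℤ) ^ d - 1)) :
    DIso φ d n d n' := by
  let c : ℕ → LaurentSeries k := fun j => HahnSeries.single (w * (b : ℤ) ^ j) (1 : k)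
  have hcφ : ∀ j, φ (c j) = c (j + 1) := fun j => by
    simp only [c]
    rw [phi_single hb hφ1 hφ2]
    ring_nf
  have hc : ∀ j, c j ≠ 0 := fun j => by simp [c]
  have key : c 0 * HahnSeries.single (n : ℤ) (1 : k) =
      HahnSeries.single (n' : ℤ) (1 : k) * c d := by
    simp only [c, HahnSeries.single_mul_single]
    congr 1
    rw [h]
    ring
  let F0 : (Fin d → LaurentSeries k) →ₗ[LaurentSeries k] (Fin d → LaurentSeries k) :=
    { toFun := fun x j => c j * x j
      map_add' := fun x y => by funext j; simp [mul_add]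
      map_smul' := fun a x => by funext j; simp [mul_left_comm] }
  have hinj : Function.Injective F0 := by
    intro x y hxy
    funext j
    exact mul_left_cancel₀ (hc j) (congrFun hxy j)
  refine ⟨LinearEquiv.ofInjectiveEndo F0 hinj, fun x => ?_⟩
  funext j
  rw [LinearEquiv.coe_ofInjectiveEndo]
  change c j * Dphi φ d n 1 x j = Dphi φ d n' 1 (fun i => c i * x i) j
  unfold Dphi
  by_cases hj : (j : ℕ) = 0
  · rw [if_pos hj, if_pos hj, map_mul, hcφ, hj, ← mul_assoc, ← mul_assoc, key]
    have : d - 1 + 1 = d := by have := j.isLt; omega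
    simp only [this]
  · rw [if_neg hj, if_neg hj, map_mul, hcφ]
    have : (j : ℕ) - 1 + 1 = j := by omega
    simp only [this]

/-- `D(d, b n) ≅ D(d, n)`. -/
theorem DIso.mul_b {b : ℕ} (hb : 1 < b) {σ : k ≃+* k} {φ : LaurentSeries k →+* LaurentSeries k}
    (hφ1 : ∀ (f : LaurentSeries k) (m : ℤ), (φ f).coeff ((b : ℤ) * m) = σ (f.coeff m))
    (hφ2 : ∀ (f : LaurentSeries k) (m : ℤ), ¬ ((b : ℤ) ∣ m) → (φ f).coeff m = 0)
    {d n : ℕ} : DIso φ d (b * n) d n := by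
  let u : LaurentSeries k := HahnSeries.single (n : ℤ) (1 : k)
  have hu : u ≠ 0 := by simp [u]
  have huφ : φ u = HahnSeries.single ((b * n : ℕ) : ℤ) (1 : k) := by
    simp only [u]
    rw [phi_single hb hφ1 hφ2]
    push_cast
    rfl
  let F0 : (Fin d → LaurentSeries k) →ₗ[LaurentSeries k] (Fin d → LaurentSeries k) :=
    { toFun := Dphi (RingHom.id _) d n 1
      map_add' := fun x y => by funext j; simp only [Dphi, Pi.add_apply]; split_ifs <;> simp [mul_add]
      map_smul' := fun a x => by
        funext j
        simp only [Dphi, Pi.smul_apply]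
        split_ifs <;> simp [mul_left_comm] }
  have hinj : Function.Injective F0 := by
    intro x y hxy
    funext j
    have hxy : Dphi (RingHom.id _) d n 1 x = Dphi (RingHom.id _) d n 1 y := hxy
    by_cases hj : (j : ℕ) + 1 < d
    · have := congrFun hxy ⟨j + 1, hj⟩
      simpa [Dphi] using this
    · have h0 := congrFun hxy ⟨0, by have := j.isLt; omega⟩
      simp only [Dphi, if_true] at h0
      have h1 := mul_left_cancel₀ hu h0
      have h2 : (⟨d - 1, by have := j.isLt; omega⟩ : Fin d) = j := Fin.ext (by simp; omega)
      simpa [h2] using h1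
  refine ⟨LinearEquiv.ofInjectiveEndo F0 hinj, fun x => ?_⟩
  funext j
  rw [LinearEquiv.coe_ofInjectiveEndo]
  change Dphi (RingHom.id _) d n 1 (Dphi φ d (b * n) 1 x) j =
    Dphi φ d n 1 (Dphi (RingHom.id _) d n 1 x) j
  simp only [Dphi, RingHom.id_apply, ← huφ]
  split_ifs <;> simp [u]

theorem DIso.mul_pow {b : ℕ} (hb : 1 < b) {σ : k ≃+* k} {φ : LaurentSeries k →+* LaurentSeries k}
    (hφ1 : ∀ (f : LaurentSeries k) (m : ℤ), (φ f).coeff ((b : ℤ) * m) = σ (f.coeff m))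
    (hφ2 : ∀ (f : LaurentSeries k) (m : ℤ), ¬ ((b : ℤ) ∣ m) → (φ f).coeff m = 0)
    {d n : ℕ} (s : ℕ) : DIso φ d (b ^ s * n) d n := by
  induction s with
  | zero => simpa using DIso.rfl' φ d n
  | succ s ih =>
    have := (DIso.mul_b hb hφ1 hφ2 (d := d) (n := b ^ s * n)).trans ih
    rwa [← mul_assoc, ← pow_succ'] at this

theorem den_eq {b : ℕ} {r r' : ℚ} (hden' : r'.den.Coprime b) {s : ℕ} {m : ℤ}
    (h : r - (b : ℚ) ^ s * r' = m) : r.den = r'.den := by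
  have hr : (r.num : ℚ) = r * r.den := (Rat.mul_den_eq_num r).symm
  have hr' : (r'.num : ℚ) = r' * r'.den := (Rat.mul_den_eq_num r').symm
  have e1 : r.num * r'.den = r.den * ((b : ℤ) ^ s * r'.num + m * r'.den) := by
    have : (r.num : ℚ) * r'.den = r.den * ((b : ℚ) ^ s * r'.num + m * r'.den) := by
      rw [hr, hr', ← h]; ring
    exact_mod_cast this
  have e2 : (r'.den : ℤ) * (r.num - m * r.den) = r.den * ((b : ℤ) ^ s * r'.num) := by
    linarith
  apply Nat.dvd_antisymm
  · have h1 : (r.den : ℤ) ∣ r.num * r'.den := ⟨_, e1⟩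
    have hco : IsCoprime (r.den : ℤ) r.num := by
      rw [Int.isCoprime_iff_gcd_eq_one]
      exact r.reduced.symm
    exact_mod_cast hco.dvd_of_dvd_mul_left h1
  · have h1 : (r'.den : ℤ) ∣ r.den * ((b : ℤ) ^ s * r'.num) := ⟨_, e2.symm⟩
    have hco : IsCoprime (r'.den : ℤ) r'.num := by
      rw [Int.isCoprime_iff_gcd_eq_one]
      exact r'.reduced.symm
    have hco2 : IsCoprime (r'.den : ℤ) ((b : ℤ) ^ s) :=
      (Nat.isCoprime_iff_coprime.2 hden').pow_right
    exact_mod_cast (hco2.mul_right hco).dvd_of_dvd_mul_right h1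

theorem DIso.backward {b : ℕ} (hb : 1 < b) {σ : k ≃+* k} {φ : LaurentSeries k →+* LaurentSeries k}
    (hφ1 : ∀ (f : LaurentSeries k) (m : ℤ), (φ f).coeff ((b : ℤ) * m) = σ (f.coeff m))
    (hφ2 : ∀ (f : LaurentSeries k) (m : ℤ), ¬ ((b : ℤ) ∣ m) → (φ f).coeff m = 0)
    {r r' : ℚ} (hden' : r'.den.Coprime b) {n n' : ℕ}
    (hd : 0 < orderOf (b : ZMod r.den))
    (hn : ∃ m : ℤ,
      (n : ℚ) / ((b : ℚ) ^ (orderOf (b : ZMod r.den)) - 1) - r = (m : ℚ))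
    (hn' : ∃ m : ℤ,
      (n' : ℚ) / ((b : ℚ) ^ (orderOf (b : ZMod r'.den)) - 1) - r' = (m : ℚ))
    {s : ℕ} {m : ℤ} (h : r - (b : ℚ) ^ s * r' = m) :
    DIso φ (orderOf (b : ZMod r.den)) n (orderOf (b : ZMod r'.den)) n' := by
  rw [← den_eq hden' h] at hn' ⊢
  generalize orderOf (b : ZMod r.den) = d at *
  obtain ⟨t, ht⟩ := hn
  obtain ⟨t', ht'⟩ := hn'
  have hQ : (b : ℚ) ^ d - 1 ≠ 0 := by
    have : (1 : ℚ) < (b : ℚ) ^ d := one_lt_pow₀ (by exact_mod_cast hb) hd.ne'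
    linarith
  refine (DIso.shift hb hφ1 hφ2 (n' := b ^ s * n') (t + m - (b : ℤ) ^ s * t') ?_).trans
    (DIso.mul_pow hb hφ1 hφ2 s)
  have h1 : (n : ℚ) = (r + t) * ((b : ℚ) ^ d - 1) := by rw [← ht]; field_simp; try ring
  have h2 : (n' : ℚ) = (r' + t') * ((b : ℚ) ^ d - 1) := by rw [← ht']; field_simp; try ring
  have : (n : ℚ) = (b : ℚ) ^ s * n' + (t + m - (b : ℚ) ^ s * t') * ((b : ℚ) ^ d - 1) := by
    rw [h1, h2, ← h]; ring
  exact_mod_cast this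

end Helpers

/-- `D(r) ≅ D(r')` if and only if `r` and `r'` have the same class in `R_b`, i.e.
`r - bˢ r' ∈ ℤ` for some `s ∈ ℤ`.  Here `D(r) = D(ℓ(r), n)` with `ℓ(r)` the order of
`b` modulo the reduced denominator of `r` and `n/(b^{ℓ(r)} - 1) ≡ r (mod ℤ)`. -/
theorem stmt16 (p : ℕ) [Fact p.Prime] (b : ℕ) (hb : 1 < b)
    (σ : AlgebraicClosure (ZMod p) ≃+* AlgebraicClosure (ZMod p))
    (φ : LaurentSeries (AlgebraicClosure (ZMod p)) →+*
      LaurentSeries (AlgebraicClosure (ZMod p)))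
    (hφ1 : ∀ (f : LaurentSeries (AlgebraicClosure (ZMod p))) (m : ℤ),
      (φ f).coeff ((b : ℤ) * m) = σ (f.coeff m))
    (hφ2 : ∀ (f : LaurentSeries (AlgebraicClosure (ZMod p))) (m : ℤ),
      ¬ ((b : ℤ) ∣ m) → (φ f).coeff m = 0)
    (r r' : ℚ) (hden : r.den.Coprime b) (hden' : r'.den.Coprime b)
    (n n' : ℕ)
    (hn : ∃ m : ℤ,
      (n : ℚ) / ((b : ℚ) ^ (orderOf (b : ZMod r.den)) - 1) - r = (m : ℚ))
    (hn' : ∃ m : ℤ,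
      (n' : ℚ) / ((b : ℚ) ^ (orderOf (b : ZMod r'.den)) - 1) - r' = (m : ℚ)) :
    (∃ F : (Fin (orderOf (b : ZMod r.den)) →
          LaurentSeries (AlgebraicClosure (ZMod p))) ≃ₗ[LaurentSeries
            (AlgebraicClosure (ZMod p))]
        (Fin (orderOf (b : ZMod r'.den)) → LaurentSeries (AlgebraicClosure (ZMod p))),
      ∀ x, F (Dphi φ (orderOf (b : ZMod r.den)) n 1 x) =
        Dphi φ (orderOf (b : ZMod r'.den)) n' 1 (F x)) ↔
    (∃ s m : ℤ, r - (b : ℚ) ^ s * r' = (m : ℚ)) := by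
  have hpos : ∀ q : ℕ, q ≠ 0 → q.Coprime b → 0 < orderOf (b : ZMod q) := by
    intro q hq hc
    have : NeZero q := ⟨hq⟩
    have := orderOf_pos (ZMod.unitOfCoprime b hc.symm)
    rwa [← orderOf_units, ZMod.coe_unitOfCoprime] at this
  have hd := hpos _ r.den_nz hden
  have hd' := hpos _ r'.den_nz hden'
  have hb0 : (b : ℚ) ≠ 0 := by positivity
  constructor
  · intro h
    obtain ⟨hdd, j, v, hv⟩ := DIso.forward hb hφ1 hφ2 hd h
    rw [← hdd] at hn'
    obtain ⟨t, ht⟩ := hn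
    obtain ⟨t', ht'⟩ := hn'
    generalize orderOf (b : ZMod r.den) = d at *
    have hQ : (b : ℚ) ^ d - 1 ≠ 0 := by
      have : (1 : ℚ) < (b : ℚ) ^ d := one_lt_pow₀ (by exact_mod_cast hb) hd.ne'
      linarith
    have hvq : (n : ℚ) - n' * (b : ℚ) ^ j = ((b : ℚ) ^ d - 1) * v := by exact_mod_cast hv
    refine ⟨j, v - t + (b : ℤ) ^ j * t', ?_⟩
    push_cast
    rw [zpow_natCast, ← ht, ← ht']
    field_simp
    linarith
  · rintro ⟨s, m, h⟩
    obtain ⟨s, rfl | rfl⟩ := s.eq_nat_or_neg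
    · rw [zpow_natCast] at h
      exact DIso.backward hb hφ1 hφ2 hden' hd hn hn' h
    · rw [zpow_neg, zpow_natCast] at h
      have h' : r' - (b : ℚ) ^ s * r = ((-(b : ℤ) ^ s * m : ℤ) : ℚ) := by
        push_cast
        rw [← h]
        field_simp
        ring
      exact (DIso.backward hb hφ1 hφ2 hden hd' hn' hn h').symm
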